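/- Let f ∈ C²(S¹×ℝ×ℝ, ℝ), let e⁻ be an equilibrium and γ⁺ a classical periodic solution of minimal period p > 0 of u_t = u_xx + f(x,u,u_x) with γ⁺(·,t) ≠ e⁻ for all t. Let u be a bounded classical solution on S¹×ℝ and a ∈ ℝ be such that ‖u(·,t) − e⁻‖_{C¹(S¹)} → 0 as t → −∞ and ‖u(·,t) − γ⁺(·,a+t)‖_{C¹(S¹)} → 0 as t → +∞, and assume u(·,t) ≠ e⁻ and u(·,t) ≠ γ⁺(·,a+t) for all t. Then for every t ∈ ℝ one has z(u(·,t) − γ⁺(·,a+t)) ≤ z(γ⁺(·,a) − e⁻) ≤ z(u(·,t) − e⁻). -/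

import Mathlib

open Set

/-- Zero number (number of strict sign changes) of a `1`-periodic function on `ℝ`,
viewed as a function on the circle `S¹ = ℝ/ℤ`. -/
noncomputable def zeroNumber (φ : ℝ → ℝ) : ℕ∞ :=
  ⨆ k ∈ {k : ℕ | ∃ x : Fin k → ℝ, StrictMono x ∧ (∀ i j : Fin k, x j < x i + 1) ∧
      ∀ i : Fin k, φ (x i) * φ (x (finRotate k i)) < 0}, (k : ℕ∞)

/-- An equilibrium of `u_t = u_xx + f(x,u,u_x)` on the circle. -/
def IsEquilibrium (f : ℝ → ℝ → ℝ → ℝ) (e : ℝ → ℝ) : Prop :=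
  Function.Periodic e 1 ∧ ContDiff ℝ 2 e ∧
    ∀ x, deriv (deriv e) x + f x (e x) (deriv e x) = 0

/-- A classical solution `u` (written `u t x` for `u(x,t)`) on `S¹ × ℝ` of
`u_t = u_xx + f(x,u,u_x)`. -/
def IsClassicalSolution (f : ℝ → ℝ → ℝ → ℝ) (u : ℝ → ℝ → ℝ) : Prop :=
  (∀ t, Function.Periodic (u t) 1)
  ∧ Continuous (fun p : ℝ × ℝ => u p.1 p.2)
  ∧ (∀ t x : ℝ, DifferentiableAt ℝ (fun s => u s x) t)
  ∧ (∀ t, Differentiable ℝ (u t))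
  ∧ (∀ t, Differentiable ℝ (deriv (u t)))
  ∧ Continuous (fun p : ℝ × ℝ => deriv (fun s => u s p.2) p.1)
  ∧ Continuous (fun p : ℝ × ℝ => deriv (u p.1) p.2)
  ∧ Continuous (fun p : ℝ × ℝ => deriv (deriv (u p.1)) p.2)
  ∧ ∀ t x : ℝ, deriv (fun s => u s x) t
      = deriv (deriv (u t)) x + f x (u t x) (deriv (u t) x)

/-- A classical periodic solution of minimal period `p > 0`. -/
def IsPeriodicSolution (f : ℝ → ℝ → ℝ → ℝ) (γ : ℝ → ℝ → ℝ) (p : ℝ) : Prop :=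
  IsClassicalSolution f γ ∧ 0 < p ∧ (∀ t, γ (t + p) = γ t) ∧
    ∀ q, 0 < q → (∀ t, γ (t + q) = γ t) → p ≤ q


structure Nice (w : ℝ → ℝ → ℝ) : Prop where
  per : ∀ t x, w t (x+1) = w t x
  cont : Continuous (fun p : ℝ × ℝ => w p.1 p.2)
  dt : ∀ t x, DifferentiableAt ℝ (fun s => w s x) t
  dx : ∀ t, Differentiable ℝ (w t)
  dxx : ∀ t, Differentiable ℝ (deriv (w t))
  contx : Continuous (fun p : ℝ × ℝ => deriv (w p.1) p.2)
  ineq : ∀ T1 T2 : ℝ, ∃ C : ℝ, 0 ≤ C ∧ ∀ t ∈ Icc T1 T2, ∀ x,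
    |deriv (fun s => w s x) t - deriv (deriv (w t)) x| ≤ C * (|w t x| + |deriv (w t) x|)

theorem Nice.neg {w : ℝ → ℝ → ℝ} (h : Nice w) : Nice (fun t x => - w t x) := by
  have e1 : ∀ t, deriv (fun x => - w t x) = fun x => - deriv (w t) x := by
    intro t; ext x; simp
  refine ⟨fun t x => by simp [h.per], h.cont.neg, fun t x => (h.dt t x).neg,
    fun t => (h.dx t).neg, fun t => ?_, ?_, fun T1 T2 => ?_⟩
  · rw [e1]; exact (h.dxx t).neg
  · simp only [e1]; exact h.contx.neg
  · obtain ⟨C, hC, hh⟩ := h.ineq T1 T2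
    refine ⟨C, hC, fun t ht x => ?_⟩
    have := hh t ht x
    simp only [e1]
    rw [deriv.fun_neg, deriv.fun_neg, abs_neg, abs_neg, ← abs_neg]
    convert this using 2
    ring

theorem second_deriv_nonneg {g : ℝ → ℝ} (x : ℝ) (hg : Differentiable ℝ g)
    (h : IsLocalMin g x) : 0 ≤ deriv (deriv g) x := by
  by_contra hn
  push Not at hn
  have h0 : deriv g x = 0 := h.deriv_eq_zero
  have hmax : IsLocalMax g x := isLocalMax_of_deriv_deriv_neg hn h0 (hg x).continuousAt
  have hc : g =ᶠ[nhds x] fun _ => g x := by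
    filter_upwards [h, hmax] with y h1 h2
    exact le_antisymm h2 h1
  have := (hc.deriv).deriv_eq
  simp at this
  linarith

theorem left_deriv_nonpos {g : ℝ → ℝ} (t δ : ℝ) (hδ : 0 < δ) (hg : DifferentiableAt ℝ g t)
    (h : ∀ s, t - δ < s → s < t → g t ≤ g s) : deriv g t ≤ 0 := by
  have h1 := hg.hasDerivAt.hasDerivWithinAt (s := Iio t)
  rw [hasDerivWithinAt_iff_tendsto_slope' (by simp)] at h1
  refine le_of_tendsto h1 ?_
  have : Ioo (t-δ) t ∈ nhdsWithin t (Iio t) := Ioo_mem_nhdsLT (by linarith)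
  filter_upwards [this] with s hs
  rw [slope_def_field]
  have := h s hs.1 hs.2
  exact div_nonpos_of_nonneg_of_nonpos (by linarith) (by linarith [hs.2])

/-- Reachability: backward positive path. -/
theorem Nice.backward {w : ℝ → ℝ → ℝ} (h : Nice w) {t1 T x : ℝ} (hT : t1 ≤ T) (hx : 0 < w T x) :
    ∃ η : ℝ → ℝ, Continuous η ∧ η T = x ∧ ∀ r ∈ Icc t1 T, 0 < w r (η r) := by
  have hperz : ∀ t x (n : ℤ), w t (x + n) = w t x := by
    intro t x n
    have := (show Function.Periodic (w t) 1 from h.per t).int_mul n x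
    simpa using this
  obtain ⟨C, hC, hineq⟩ := h.ineq t1 T
  set R : Set (ℝ × ℝ) := {q | q.1 ∈ Icc t1 T ∧ ∃ η : ℝ → ℝ, Continuous η ∧ (∃ j : ℤ, η T = x + j) ∧
    η q.1 = q.2 ∧ ∀ r ∈ Icc q.1 T, 0 < w r (η r)} with hR
  -- suffices to reach t1
  suffices hs : ∃ y, (t1, y) ∈ R by
    obtain ⟨y, _, η, hη, ⟨j, hj⟩, _, hp⟩ := hs
    refine ⟨fun r => η r - j, by fun_prop, by simp [hj], fun r hr => ?_⟩
    have := hperz r (η r - j) j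
    rw [← this]; simpa using hp r hr
  have hshift : ∀ s y (n : ℤ), (s, y) ∈ R → (s, y + n) ∈ R := by
    rintro s y n ⟨h1, η, hη, ⟨j, hj⟩, h2, h3⟩
    refine ⟨h1, fun r => η r + n, by fun_prop, ⟨j + n, by simp [hj]; ring⟩, by simpa using h2, ?_⟩
    intro r hr
    simp only [hperz]
    exact h3 r hr
  have hext : ∀ s y s' y', (s, y) ∈ R → t1 ≤ s' → s' < s →
      (∀ r ∈ Icc s' s, 0 < w r (y' + (r - s') / (s - s') * (y - y'))) → (s', y') ∈ R := by
    rintro s y s' y' ⟨h1, η, hη, hj, h2, h3⟩ hs1 hs2 hl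
    simp only at h1 h2 h3
    have hne : s - s' ≠ 0 := by linarith
    refine ⟨⟨hs1, by simp; linarith [h1.2]⟩, fun r => if r ≤ s then y' + (r - s') / (s - s') * (y - y') else η r, ?_, ?_, ?_, ?_⟩
    · refine Continuous.if_le (by fun_prop) hη continuous_id continuous_const ?_
      intro r hr
      subst hr
      rw [h2, div_self hne]; ring
    · obtain ⟨j, hj⟩ := hj
      refine ⟨j, ?_⟩
      by_cases hTs : T ≤ s
      · have : T = s := le_antisymm hTs h1.2
        simp only [this, le_refl, if_true]
        rw [div_self hne, ← hj, this, h2]; ring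
      · simp [hTs, hj]
    · simp [hs2.le]
    · intro r hr
      by_cases hrs : r ≤ s
      · simp only [hrs, if_true]; exact hl r ⟨hr.1, hrs⟩
      · simp only [hrs, if_false]
        exact h3 r ⟨by linarith, hr.2⟩
  have hpos : ∀ q ∈ R, 0 < w q.1 q.2 := by
    rintro ⟨s, y⟩ ⟨h1, η, hη, hj, h2, h3⟩
    have := h3 s ⟨le_refl _, h1.2⟩
    simp only at h2
    rwa [h2] at this
  have hTx : (T, x) ∈ R := ⟨⟨hT, le_refl _⟩, fun _ => x, continuous_const, ⟨0, by simp⟩, rfl, by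
    intro r hr
    have : r = T := le_antisymm hr.2 hr.1
    rw [this]; exact hx⟩
  set G : ℝ × ℝ → ℝ := fun q => Real.exp (-(C+1) * q.1) * w q.1 q.2 with hG
  have hGc : Continuous G := by
    have := h.cont
    fun_prop
  set K : Set (ℝ × ℝ) := closure R ∩ (Icc t1 T ×ˢ Icc 0 1) with hK
  have hKc : IsCompact K := (isCompact_Icc.prod isCompact_Icc).inter_left isClosed_closure
  have hfr : ∀ s y, (s, y) ∈ R → (s, Int.fract y) ∈ R := by
    intro s y hy
    have := hshift s y (-⌊y⌋) hy
    rw [Int.fract]; convert this using 2; push_cast; ring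
  have hRK : ∀ s y, (s, y) ∈ R → (s, Int.fract y) ∈ K := by
    intro s y hy
    refine ⟨subset_closure (hfr s y hy), hy.1, Int.fract_nonneg y, (Int.fract_lt_one y).le⟩
  have hGfr : ∀ s y, G (s, Int.fract y) = G (s, y) := by
    intro s y
    simp only [hG]
    have := hperz s (Int.fract y) ⌊y⌋
    rw [← this, Int.fract_add_floor]
  obtain ⟨⟨s0, y0⟩, hmem, hmax⟩ := hKc.exists_isMaxOn ⟨_, hRK _ _ hTx⟩ hGc.continuousOn
  have hmaxR : ∀ q ∈ R, G q ≤ G (s0, y0) := by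
    rintro ⟨s, y⟩ hq
    rw [← hGfr]
    exact hmax (hRK s y hq)
  have hG0 : 0 < w s0 y0 := by
    have h1 := hmaxR _ hTx
    have h2 : 0 < G (T, x) := mul_pos (Real.exp_pos _) hx
    have h3 : 0 < G (s0, y0) := lt_of_lt_of_le h2 h1
    exact (pos_iff_pos_of_mul_pos h3).mp (Real.exp_pos _)
  obtain ⟨δ, hδ, hball⟩ : ∃ δ > 0, ∀ s y, |s - s0| < δ → |y - y0| < δ → 0 < w s y := by
    have := h.cont.continuousAt.eventually (lt_mem_nhds (a := 0) (b := w (s0,y0).1 (s0,y0).2) hG0)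
    rw [Metric.eventually_nhds_iff] at this
    obtain ⟨δ, hδ, hh⟩ := this
    refine ⟨δ, hδ, fun s y h1 h2 => ?_⟩
    apply @hh (s, y)
    rw [Prod.dist_eq, max_lt_iff]
    exact ⟨h1, h2⟩
  have hreach : ∀ s y, |s - s0| < δ → |y - y0| < δ → t1 ≤ s → s < s0 → (s, y) ∈ R := by
    intro s y h1 h2 h3 h4
    have : ∃ q ∈ R, dist (s0, y0) q < min δ (s0 - s) := by
      exact Metric.mem_closure_iff.mp hmem.1 _ (lt_min hδ (by linarith))
    obtain ⟨⟨s', y'⟩, hq, hd⟩ := this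
    rw [Prod.dist_eq, max_lt_iff, lt_min_iff, lt_min_iff] at hd
    obtain ⟨⟨hd1, hd2⟩, hd3, hd4⟩ := hd
    simp only [Real.dist_eq] at hd1 hd2 hd3
    rw [abs_lt] at *
    have hss : s < s' := by linarith
    refine hext s' y' s y hq h3 hss ?_
    intro r hr
    have hθ0 : 0 ≤ (r - s) / (s' - s) := div_nonneg (by linarith [hr.1]) (by linarith)
    have hθ1 : (r - s) / (s' - s) ≤ 1 := by rw [div_le_one (by linarith)]; linarith [hr.2]
    apply hball
    · rw [abs_lt]; constructor <;> linarith [hr.1, hr.2]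
    · set θ := (r - s) / (s' - s)
      rw [abs_lt]; constructor
      · rcases le_total y y' with hyy | hyy <;> nlinarith
      · rcases le_total y y' with hyy | hyy <;> nlinarith
  rcases eq_or_lt_of_le hmem.2.1.1 with he | hlt
  · -- s0 = t1
    simp only at he
    have : ∃ q ∈ R, dist (s0, y0) q < δ := Metric.mem_closure_iff.mp hmem.1 _ hδ
    obtain ⟨⟨s', y'⟩, hq, hd⟩ := this
    rw [Prod.dist_eq, max_lt_iff] at hd
    obtain ⟨hd1, hd2⟩ := hd
    simp only [Real.dist_eq] at hd1 hd2
    rcases eq_or_lt_of_le hq.1.1 with he' | hlt'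
    · simp only at he'
      subst he'; exact ⟨y', hq⟩
    · simp only at hlt'
      refine ⟨y', hext s' y' t1 y' hq le_rfl hlt' ?_⟩
      intro r hr
      apply hball
      · rw [abs_lt] at *; constructor <;> linarith [hr.1, hr.2]
      · simp only [sub_self, mul_zero, add_zero]
        rw [abs_sub_comm]; exact hd2
  · exfalso
    simp only at hlt
    have hslice : ∀ y, |y - y0| < δ → G (s0, y) ≤ G (s0, y0) := by
      intro y hy
      have hcy : Continuous (fun s => G (s, y)) := by fun_prop
      have h1 : Filter.Tendsto (fun s => G (s, y)) (nhdsWithin s0 (Iio s0)) (nhds (G (s0, y))) :=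
        hcy.continuousAt.tendsto.mono_left nhdsWithin_le_nhds
      refine le_of_tendsto h1 ?_
      have : Ioo (max t1 (s0 - δ)) s0 ∈ nhdsWithin s0 (Iio s0) :=
        Ioo_mem_nhdsLT (by rw [max_lt_iff]; constructor <;> linarith)
      filter_upwards [this] with s hs
      rw [mem_Ioo, max_lt_iff] at hs
      exact hmaxR _ (hreach s y (by rw [abs_lt]; constructor <;> linarith) hy hs.1.1.le hs.2)
    have hwslice : ∀ y, |y - y0| < δ → w s0 y ≤ w s0 y0 := by
      intro y hy
      exact le_of_mul_le_mul_left (hslice y hy) (Real.exp_pos _)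
    have hlm : IsLocalMax (w s0) y0 := by
      rw [IsLocalMax, IsMaxFilter, Metric.eventually_nhds_iff]
      exact ⟨δ, hδ, fun y hy => hwslice y hy⟩
    have hx0 : deriv (w s0) y0 = 0 := hlm.deriv_eq_zero
    have hxx : deriv (deriv (w s0)) y0 ≤ 0 := by
      have h1 := second_deriv_nonneg (g := fun y => - w s0 y) y0 (h.dx s0).neg hlm.neg
      have e1 : deriv (fun x => - w s0 x) = fun x => - deriv (w s0) x := by
        ext x; simp
      rw [e1, deriv.fun_neg] at h1
      linarith
    have hdG : HasDerivAt (fun s => G (s, y0))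
        (Real.exp (-(C+1) * s0) * (-(C+1)) * w s0 y0 + Real.exp (-(C+1) * s0) * deriv (fun s => w s y0) s0) s0 := by
      have h1 : HasDerivAt (fun s : ℝ => Real.exp (-(C+1) * s)) (Real.exp (-(C+1) * s0) * (-(C+1))) s0 := by
        have := ((hasDerivAt_id s0).const_mul (-(C+1))).exp
        simpa using this
      exact h1.mul (h.dt s0 y0).hasDerivAt
    have ht : 0 ≤ deriv (fun s => G (s, y0)) s0 := by
      have h1 := left_deriv_nonpos (g := fun s => - G (s, y0)) s0 (min δ (s0 - t1)) (lt_min hδ (by linarith))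
        hdG.differentiableAt.neg ?_
      · rw [deriv.fun_neg] at h1; linarith
      · intro s h1 h2
        have h3 := min_le_left δ (s0 - t1)
        have h4 := min_le_right δ (s0 - t1)
        have := hmaxR _ (hreach s y0 (by rw [abs_lt]; constructor <;> linarith) (by simpa using hδ) (by linarith) h2)
        linarith
    rw [hdG.deriv] at ht
    have ht' : 0 ≤ -(C+1) * w s0 y0 + deriv (fun s => w s y0) s0 := by
      have h5 : 0 ≤ Real.exp (-(C+1) * s0) * (-(C+1) * w s0 y0 + deriv (fun s => w s y0) s0) := by
        linarith
      exact nonneg_of_mul_nonneg_right h5 (Real.exp_pos _)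
    have hi := hineq s0 hmem.2.1 y0
    rw [hx0, abs_zero, add_zero, abs_of_pos hG0] at hi
    have := (abs_le.mp hi).2
    nlinarith


theorem Nice.barrier {w : ℝ → ℝ → ℝ} (h : Nice w) {t1 t0 x0 β K : ℝ} (ht : t1 ≤ t0) (hx : x0 < β)
    (hK : 0 ≤ K) (hcorner : β ≤ x0 + K * (t0 - t1))
    (hnn : ∀ t x, t1 ≤ t → t ≤ t0 → x0 + K * (t0 - t) ≤ x → x ≤ β → 0 ≤ w t x)
    (hβ : ∀ t, t1 ≤ t → t ≤ t0 → 0 < w t β) :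
    ∃ κ > 0, ∀ x, x0 ≤ x → x ≤ β → κ * (x - x0) ≤ w t0 x := by
  obtain ⟨C, hC, hineq⟩ := h.ineq t1 t0
  have hcβ : Continuous (fun t => w t β) := h.cont.comp (by fun_prop : Continuous fun t : ℝ => (t, β))
  obtain ⟨tm, htm, hmin⟩ := (isCompact_Icc (a := t1) (b := t0)).exists_isMinOn ⟨t1, le_rfl, ht⟩ hcβ.continuousOn
  set m := w tm β with hm
  have hmpos : 0 < m := hβ tm htm.1 htm.2
  have hmle : ∀ t, t1 ≤ t → t ≤ t0 → m ≤ w t β := fun t h1 h2 => hmin ⟨h1, h2⟩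
  set A := K + 2 * C + 1 with hA
  have hA1 : 1 ≤ A := by linarith
  set ε := m / Real.exp (A * (β - x0)) with hε
  have hεpos : 0 < ε := div_pos hmpos (Real.exp_pos _)
  have hεe : ε * Real.exp (A * (β - x0)) = m := by rw [hε]; field_simp
  set ψ : ℝ → ℝ → ℝ := fun t x => ε * (Real.exp (A * (x - x0 - K * (t0 - t))) - 1) with hψ
  set D : Set (ℝ × ℝ) := {q | t1 ≤ q.1 ∧ q.1 ≤ t0 ∧ x0 + K * (t0 - q.1) ≤ q.2 ∧ q.2 ≤ β} with hD
  have hDc : IsCompact D := by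
    have hcl : IsClosed D := by
      have e : D = {q : ℝ × ℝ | t1 ≤ q.1} ∩ ({q | q.1 ≤ t0} ∩ ({q | x0 + K * (t0 - q.1) ≤ q.2} ∩ {q | q.2 ≤ β})) := by
        ext q; simp [hD]
      rw [e]
      refine IsClosed.inter ?_ (IsClosed.inter ?_ (IsClosed.inter ?_ ?_))
      · exact isClosed_le (by fun_prop) (by fun_prop)
      · exact isClosed_le (by fun_prop) (by fun_prop)
      · exact isClosed_le (by fun_prop) (by fun_prop)
      · exact isClosed_le (by fun_prop) (by fun_prop)
    refine IsCompact.of_isClosed_subset ((isCompact_Icc (a := t1) (b := t0)).prod (isCompact_Icc (a := x0) (b := β))) hcl ?_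
    rintro ⟨t, x⟩ ⟨h1, h2, h3, h4⟩
    simp only at h1 h2 h3 h4
    refine ⟨⟨h1, h2⟩, ?_, h4⟩
    have : 0 ≤ K * (t0 - t) := mul_nonneg hK (by linarith)
    simp only; linarith
  have hcd : Continuous (fun q : ℝ × ℝ => w q.1 q.2 - ψ q.1 q.2) := by
    have := h.cont
    simp only [hψ]
    fun_prop
  have hmain : ∀ q ∈ D, 0 ≤ w q.1 q.2 - ψ q.1 q.2 := by
    by_contra hcon
    push Not at hcon
    obtain ⟨q0, hq0, hq0n⟩ := hcon
    obtain ⟨⟨s, y⟩, hsy, hmn⟩ := hDc.exists_isMinOn ⟨q0, hq0⟩ hcd.continuousOn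
    have hneg : w s y - ψ s y < 0 := lt_of_le_of_lt (hmn hq0) hq0n
    obtain ⟨h1, h2, h3, h4⟩ := hsy
    simp only at h1 h2 h3 h4
    have hwn := hnn s y h1 h2 h3 h4
    -- not on the left line
    have h3' : x0 + K * (t0 - s) < y := by
      rcases eq_or_lt_of_le h3 with he | hl
      · exfalso
        have : ψ s y = 0 := by
          simp only [hψ]
          rw [← he]; simp
        linarith
      · exact hl
    have hKs : 0 ≤ K * (t0 - s) := mul_nonneg hK (by linarith)
    have h4' : y < β := by
      rcases eq_or_lt_of_le h4 with he | hl
      · exfalso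
        have h5 := hmle s h1 h2
        have : ψ s y ≤ m := by
          simp only [hψ]
          rw [he, ← hεe]
          apply mul_le_mul_of_nonneg_left _ hεpos.le
          have : Real.exp (A * (β - x0 - K * (t0 - s))) ≤ Real.exp (A * (β - x0)) := by
            apply Real.exp_le_exp.mpr
            nlinarith
          linarith
        rw [← he] at h5
        linarith
      · exact hl
    have h1' : t1 < s := by
      rcases eq_or_lt_of_le h1 with he | hl
      · exfalso; rw [← he] at h3'; linarith
      · exact hl
    set E := Real.exp (A * (y - x0 - K * (t0 - s))) with hE
    have hEpos : 0 < E := Real.exp_pos _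
    have hψxall : ∀ x, HasDerivAt (ψ s) (ε * (A * Real.exp (A * (x - x0 - K * (t0 - s))))) x := by
      intro x
      have h1 : HasDerivAt (fun x : ℝ => A * (x - x0 - K * (t0 - s))) A x := by
        have := (((hasDerivAt_id x).sub_const x0).sub_const (K * (t0 - s))).const_mul A
        simpa using this
      have := ((h1.exp).sub_const 1).const_mul ε
      exact this.congr_deriv (by ring)
    have hψx : deriv (ψ s) = fun x => ε * (A * Real.exp (A * (x - x0 - K * (t0 - s)))) := by
      ext x; exact (hψxall x).deriv
    have hψxx : HasDerivAt (deriv (ψ s)) (ε * (A * (A * E))) y := by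
      rw [hψx]
      have h1 : HasDerivAt (fun x : ℝ => A * (x - x0 - K * (t0 - s))) A y := by
        have := (((hasDerivAt_id y).sub_const x0).sub_const (K * (t0 - s))).const_mul A
        simpa using this
      have := ((h1.exp).const_mul A).const_mul ε
      exact this.congr_deriv (by rw [hE]; ring)
    have hψt : HasDerivAt (fun r => ψ r y) (ε * (A * K * E)) s := by
      have h1 : HasDerivAt (fun r : ℝ => A * (y - x0 - K * (t0 - r))) (A * K) s := by
        have := ((((hasDerivAt_id s).const_sub t0).const_mul K).const_sub (y - x0)).const_mul A
        simpa using this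
      have := ((h1.exp).sub_const 1).const_mul ε
      exact this.congr_deriv (by rw [hE]; ring)
    have hloc : IsLocalMin (fun x => w s x - ψ s x) y := by
      have : Ioo (x0 + K * (t0 - s)) β ∈ nhds y := Ioo_mem_nhds h3' h4'
      filter_upwards [this] with x hx
      exact hmn (show (s, x) ∈ D from ⟨h1, h2, hx.1.le, hx.2.le⟩)
    have hdiffψ : Differentiable ℝ (ψ s) := fun x => (hψxall x).differentiableAt
    have e1 : deriv (fun x => w s x - ψ s x) = fun x => deriv (w s) x - deriv (ψ s) x := by
      ext x; exact deriv_fun_sub (h.dx s x) (hdiffψ x)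
    have hx0 := hloc.deriv_eq_zero
    have hxx := second_deriv_nonneg (g := fun x => w s x - ψ s x) y ((h.dx s).sub hdiffψ) hloc
    rw [e1, deriv_fun_sub (h.dxx s y) hψxx.differentiableAt, hψxx.deriv] at hxx
    rw [e1] at hx0
    simp only [(hψxall y).deriv] at hx0
    have hdt : deriv (fun r => w r y - ψ r y) s ≤ 0 := by
      -- a small δ
      set g := y - (x0 + K * (t0 - s)) with hg
      have hgpos : 0 < g := by linarith
      refine left_deriv_nonpos s (min (s - t1) (g / (K + 1))) (lt_min (by linarith) (by positivity))
        ((h.dt s y).sub hψt.differentiableAt) ?_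
      intro r hr1 hr2
      have ha := min_le_left (s - t1) (g / (K + 1))
      have hb := min_le_right (s - t1) (g / (K + 1))
      refine hmn (show (r, y) ∈ D from ⟨by simp only; linarith, by simp only; linarith, ?_, h4⟩)
      simp only
      have h5 : s - r < g / (K + 1) := by linarith
      have h6 : (s - r) * (K + 1) < g := by rwa [lt_div_iff₀ (by linarith)] at h5
      nlinarith
    rw [deriv_fun_sub (h.dt s y) hψt.differentiableAt, hψt.deriv] at hdt
    have hin := (abs_le.mp (hineq s ⟨h1, h2⟩ y)).1
    rw [abs_of_nonneg hwn] at hin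
    have hwx : deriv (w s) y = ε * (A * E) := by linarith
    rw [hwx, abs_of_nonneg (by positivity)] at hin
    have hψE : ψ s y = ε * (E - 1) := rfl
    have hwE : w s y ≤ ε * E := by nlinarith
    have hfin : ε * (A * (A * E)) ≤ ε * (A * K * E) + C * (ε * E + ε * (A * E)) := by
      have : C * (w s y + ε * (A * E)) ≤ C * (ε * E + ε * (A * E)) :=
        mul_le_mul_of_nonneg_left (by linarith) hC
      linarith
    have hfin2 : ε * E * (A * A) ≤ ε * E * (A * K + C + C * A) := by linarith
    have hfin3 := le_of_mul_le_mul_left hfin2 (by positivity)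
    nlinarith
  refine ⟨ε * A, by positivity, fun x hx1 hx2 => ?_⟩
  have := hmain (t0, x) ⟨ht, le_rfl, by simpa using hx1, hx2⟩
  simp only [hψ, sub_self, mul_zero, sub_zero] at this
  have h2 := Real.add_one_le_exp (A * (x - x0))
  nlinarith

/-- Strong positivity on an interval. -/
theorem Nice.strong {w : ℝ → ℝ → ℝ} (h : Nice w) {t1 t0 α β : ℝ} (ht : t1 < t0)
    (hnn : ∀ t x, t1 ≤ t → t ≤ t0 → α ≤ x → x ≤ β → 0 ≤ w t x)
    (hβ : ∀ t, t1 ≤ t → t ≤ t0 → 0 < w t β) : ∀ x, α < x → x ≤ β → 0 < w t0 x := by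
  intro x hx1 hx2
  have hαβ : α < β := by linarith
  have hK : 0 ≤ (β - α) / (t0 - t1) := div_nonneg (by linarith) (by linarith)
  obtain ⟨κ, hκ, hh⟩ := h.barrier (x0 := α) (K := (β - α) / (t0 - t1)) ht.le hαβ hK
    (by rw [div_mul_cancel₀ _ (by linarith)]; linarith)
    (fun t x h1 h2 h3 h4 => hnn t x h1 h2
      (by have := mul_nonneg hK (show 0 ≤ t0 - t by linarith); linarith) h4) hβ
  have := hh x hx1.le hx2
  have : 0 < κ * (x - α) := mul_pos hκ (by linarith)
  linarith

theorem Nice.contt {w : ℝ → ℝ → ℝ} (h : Nice w) (x : ℝ) : Continuous (fun t => w t x) :=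
  h.cont.comp (by fun_prop : Continuous fun t : ℝ => (t, x))

theorem Nice.piece {w : ℝ → ℝ → ℝ} (h : Nice w) {s1 s2 α β : ℝ} (hs : s1 < s2) (hαβ : α < β)
    (hα : ∀ t, s1 ≤ t → t ≤ s2 → w t α < 0) (hβ : ∀ t, s1 ≤ t → t ≤ s2 → 0 < w t β)
    (hbad : ∀ t p q, s1 ≤ t → t ≤ s2 → α ≤ p → p < q → q ≤ β → ¬ (0 < w t p ∧ w t q < 0)) :
    ∃ s1' s2', s1 ≤ s1' ∧ s1' < s2' ∧ s2' ≤ s2 ∧ ∀ t x, s1' ≤ t → t ≤ s2' → α ≤ x → x ≤ β →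
      w t x = 0 → deriv (w t) x ≠ 0 := by
  set K := (β - α + 1) / (s2 - s1) with hKdef
  have hKpos : 0 < K := div_pos (by linarith) (by linarith)
  have hKm : K * (s2 - s1) = β - α + 1 := div_mul_cancel₀ _ (by linarith)
  set Z : Set (ℝ × ℝ) := (Icc s1 s2 ×ˢ Icc α β) ∩ {q | w q.1 q.2 ≤ 0} with hZ
  have hZc : IsCompact Z := (isCompact_Icc.prod isCompact_Icc).inter_right
    (isClosed_le h.cont continuous_const)
  have hZne : (s2, α) ∈ Z := ⟨⟨⟨hs.le, le_rfl⟩, ⟨le_rfl, hαβ.le⟩⟩, (hα s2 hs.le le_rfl).le⟩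
  obtain ⟨⟨t0, x0⟩, hmem, hmax⟩ := hZc.exists_isMaxOn (f := fun q : ℝ × ℝ => q.2 + K * q.1) ⟨_, hZne⟩
    (by fun_prop)
  obtain ⟨⟨⟨ht1, ht2⟩, ⟨hx1, hx2⟩⟩, hw0⟩ := hmem
  simp only [mem_setOf_eq] at ht1 ht2 hx1 hx2 hw0
  have hmax' : ∀ t x, s1 ≤ t → t ≤ s2 → α ≤ x → x ≤ β → w t x ≤ 0 → x + K * t ≤ x0 + K * t0 := by
    intro t x h1 h2 h3 h4 h5
    exact hmax (show (t, x) ∈ Z from ⟨⟨⟨h1, h2⟩, ⟨h3, h4⟩⟩, h5⟩)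
  have hM := hmax' s2 α hs.le le_rfl le_rfl hαβ.le (hα s2 hs.le le_rfl).le
  have hx0β : x0 < β := by
    rcases eq_or_lt_of_le hx2 with he | hl
    · exfalso; rw [he] at hw0; linarith [hβ t0 ht1 ht2]
    · exact hl
  have ht0 : s1 < t0 := by
    by_contra hc
    have : t0 = s1 := by linarith
    rw [this] at hM
    nlinarith
  have hx0α : α < x0 ∨ α = x0 := lt_or_eq_of_le hx1
  obtain ⟨κ, hκ, hh⟩ := h.barrier (t1 := s1) (t0 := t0) (x0 := x0) (β := β) (K := K) ht1 hx0β hKpos.le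
    (by nlinarith) (by
      intro t x h1 h2 h3 h4
      by_contra hc
      push Not at hc
      have hxα : α ≤ x := by
        have := mul_nonneg hKpos.le (show 0 ≤ t0 - t by linarith)
        linarith
      have hxβ : x < β := by
        rcases eq_or_lt_of_le h4 with he | hl
        · exfalso; rw [he] at hc; linarith [hβ t h1 (by linarith)]
        · exact hl
      have h5 : ∀ᶠ y in nhdsWithin x (Ioi x), w t y < 0 :=
        (((h.dx t).continuous.continuousAt).eventually (gt_mem_nhds hc)).filter_mono nhdsWithin_le_nhds
      have h6 : ∀ᶠ y in nhdsWithin x (Ioi x), y ∈ Ioo x β := Ioo_mem_nhdsGT hxβ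
      obtain ⟨y, hy1, hy2⟩ := (h5.and h6).exists
      have := hmax' t y h1 (by linarith) (by linarith [hy2.1]) hy2.2.le hy1.le
      nlinarith [hy2.1])
    (fun t h1 h2 => hβ t h1 (by linarith))
  have hw00 : w t0 x0 = 0 := by
    have := hh x0 le_rfl hx2
    simp at this
    exact le_antisymm hw0 this
  have hx0α : α < x0 := by
    rcases eq_or_lt_of_le hx1 with he | hl
    · exfalso; have := hα t0 ht1 ht2; rw [he, hw00] at this; linarith
    · exact hl
  have hder : 0 < deriv (w t0) x0 := by
    refine lt_of_lt_of_le hκ ?_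
    have h1 := (h.dx t0 x0).hasDerivAt.hasDerivWithinAt (s := Ioi x0)
    rw [hasDerivWithinAt_iff_tendsto_slope' (by simp)] at h1
    refine ge_of_tendsto h1 ?_
    filter_upwards [Ioo_mem_nhdsGT hx0β] with x hx
    rw [slope_def_field, hw00, sub_zero, le_div_iff₀ (by linarith [hx.1])]
    exact hh x hx.1.le hx.2.le
  -- neighbourhood
  obtain ⟨δ, hδ, hball⟩ : ∃ δ > 0, ∀ s y, |s - t0| < δ → |y - x0| < δ → 0 < deriv (w s) y := by
    have := h.contx.continuousAt.eventually (lt_mem_nhds (a := 0) (b := deriv (w (t0,x0).1) (t0,x0).2) hder)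
    rw [Metric.eventually_nhds_iff] at this
    obtain ⟨δ, hδ, hh⟩ := this
    refine ⟨δ, hδ, fun s y h1 h2 => ?_⟩
    apply @hh (s, y)
    rw [Prod.dist_eq, max_lt_iff]
    exact ⟨h1, h2⟩
  obtain ⟨r, hr, hrδ, hrα, hrβ⟩ : ∃ r > 0, r < δ ∧ α < x0 - r ∧ x0 + r < β := by
    refine ⟨min (δ/2) (min ((x0 - α)/2) ((β - x0)/2)), ?_, ?_, ?_, ?_⟩
    · refine lt_min (by linarith) (lt_min (by linarith) (by linarith))
    · linarith [min_le_left (δ/2) (min ((x0 - α)/2) ((β - x0)/2))]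
    · linarith [min_le_right (δ/2) (min ((x0 - α)/2) ((β - x0)/2)), min_le_left ((x0 - α)/2) ((β - x0)/2)]
    · linarith [min_le_right (δ/2) (min ((x0 - α)/2) ((β - x0)/2)), min_le_right ((x0 - α)/2) ((β - x0)/2)]
  have hmono : StrictMonoOn (w t0) (Icc (x0 - r) (x0 + r)) := by
    apply strictMonoOn_of_deriv_pos (convex_Icc _ _) (h.dx t0).continuous.continuousOn
    intro x hx
    rw [interior_Icc] at hx
    exact hball t0 x (by simpa using hδ) (by rw [abs_lt]; constructor <;> linarith [hx.1, hx.2])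
  have hl0 : w t0 (x0 - r) < 0 := by
    rw [← hw00]; exact hmono ⟨le_rfl, by linarith⟩ ⟨by linarith, by linarith⟩ (by linarith)
  have hr0 : 0 < w t0 (x0 + r) := by
    rw [← hw00]; exact hmono ⟨by linarith, by linarith⟩ ⟨by linarith, le_rfl⟩ (by linarith)
  obtain ⟨η, hη, hηδ, hηs, hηl, hηr⟩ : ∃ η > 0, η < δ ∧ s1 < t0 - η ∧ (∀ t, t0 - η ≤ t → t ≤ t0 → w t (x0 - r) < 0)
      ∧ (∀ t, t0 - η ≤ t → t ≤ t0 → 0 < w t (x0 + r)) := by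
    have e1 := (h.contt (x0 - r)).continuousAt.eventually (gt_mem_nhds hl0)
    have e2 := (h.contt (x0 + r)).continuousAt.eventually (lt_mem_nhds hr0)
    have e3 := (e1.and e2)
    rw [Metric.eventually_nhds_iff] at e3
    obtain ⟨δ2, hδ2, h3⟩ := e3
    have m1 := min_le_left (δ/2) (min (δ2/2) ((t0 - s1)/2))
    have m2 := min_le_right (δ/2) (min (δ2/2) ((t0 - s1)/2))
    have m3 := min_le_left (δ2/2) ((t0 - s1)/2)
    have m4 := min_le_right (δ2/2) ((t0 - s1)/2)
    refine ⟨min (δ/2) (min (δ2/2) ((t0 - s1)/2)), ?_, ?_, ?_, ?_, ?_⟩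
    · refine lt_min (by linarith) (lt_min (by linarith) (by linarith))
    · linarith
    · linarith
    · intro t h1 h2
      exact (h3 (y := t) (by rw [Real.dist_eq, abs_lt]; constructor <;> linarith)).1
    · intro t h1 h2
      exact (h3 (y := t) (by rw [Real.dist_eq, abs_lt]; constructor <;> linarith)).2
  have hleft : ∀ t x, t0 - η ≤ t → t ≤ t0 → α ≤ x → x ≤ x0 - r → w t x ≤ 0 := by
    intro t x h1 h2 h3 h4
    by_contra hc
    push Not at hc
    have h5 := hηl t h1 h2
    have hne : x ≠ x0 - r := by intro he; rw [he] at hc; linarith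
    exact hbad t x (x0 - r) (by linarith) (by linarith) h3 (lt_of_le_of_ne h4 hne) (by linarith) ⟨hc, h5⟩
  have hright : ∀ t x, t0 - η ≤ t → t ≤ t0 → x0 + r ≤ x → x ≤ β → 0 ≤ w t x := by
    intro t x h1 h2 h3 h4
    by_contra hc
    push Not at hc
    have h5 := hηr t h1 h2
    have hne : x0 + r ≠ x := by intro he; rw [← he] at hc; linarith
    exact hbad t (x0 + r) x (by linarith) (by linarith) (by linarith) (lt_of_le_of_ne h3 hne) h4 ⟨h5, hc⟩
  refine ⟨t0 - η/2, t0, by linarith, by linarith, ht2, ?_⟩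
  intro t x h1 h2 h3 h4 h5
  by_cases hxl : x ≤ x0 - r
  · exfalso
    have hne : α ≠ x := by
      intro he; rw [← he] at h5; linarith [hα t (by linarith) (by linarith)]
    have := h.neg.strong (t1 := t0 - η) (t0 := t) (α := α) (β := x0 - r) (by linarith)
      (fun t x a1 a2 a3 a4 => by have := hleft t x a1 (by linarith) a3 a4; simpa using this)
      (fun t a1 a2 => by have := hηl t a1 (by linarith); simpa using this) x (lt_of_le_of_ne h3 hne) hxl
    rw [h5] at this; simp at this
  · by_cases hxr : x0 + r ≤ x
    · exfalso
      have hne : x0 + r ≠ x := by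
        intro he; rw [← he] at h5; linarith [hηr t (by linarith) (by linarith)]
      have := h.strong (t1 := t0 - η) (t0 := t) (α := x0 + r) (β := β) (by linarith)
        (fun t x a1 a2 a3 a4 => hright t x a1 (by linarith) a3 a4)
        (fun t a1 a2 => hβ t (by linarith) (by linarith)) x (lt_of_le_of_ne hxr hne) h4
      rw [h5] at this; linarith
    · push Not at hxl hxr
      exact (hball t x (by rw [abs_lt]; constructor <;> linarith) (by rw [abs_lt]; constructor <;> linarith)).ne'


/-- Sign-change chains indexed by natural numbers. -/
def HasSC (φ : ℝ → ℝ) (k : ℕ) : Prop := 1 ≤ k ∧ ∃ X : ℕ → ℝ, (∀ i < k, X i < X (i+1)) ∧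
  X k = X 0 + 1 ∧ ∀ i < k, φ (X i) * φ (X (i+1)) < 0

theorem Nice.perz {w : ℝ → ℝ → ℝ} (h : Nice w) (t x : ℝ) (n : ℤ) : w t (x + n) = w t x := by
  have := (show Function.Periodic (w t) 1 from h.per t).int_mul n x
  simpa using this

theorem Nice.derperz {w : ℝ → ℝ → ℝ} (h : Nice w) (t x : ℝ) (n : ℤ) :
    deriv (w t) (x + n) = deriv (w t) x := by
  rw [← deriv_comp_add_const]
  congr 1
  ext y; exact h.perz t y n

theorem Nice.backward' {w : ℝ → ℝ → ℝ} (h : Nice w) {t1 T x : ℝ} (hT : t1 ≤ T) (hx : w T x ≠ 0) :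
    ∃ η : ℝ → ℝ, Continuous η ∧ η T = x ∧ ∀ r ∈ Icc t1 T, 0 < w T x * w r (η r) := by
  rcases lt_or_gt_of_ne hx with hlt | hgt
  · obtain ⟨η, h1, h2, h3⟩ := h.neg.backward (T := T) (x := x) hT (by simpa using hlt)
    exact ⟨η, h1, h2, fun r hr => mul_pos_of_neg_of_neg hlt (by simpa using h3 r hr)⟩
  · obtain ⟨η, h1, h2, h3⟩ := h.backward hT hgt
    exact ⟨η, h1, h2, fun r hr => mul_pos hgt (h3 r hr)⟩

theorem Nice.hasSC_mono {w : ℝ → ℝ → ℝ} (h : Nice w) {t1 T : ℝ} (hT : t1 ≤ T) {k : ℕ}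
    (hk : HasSC (w T) k) : HasSC (w t1) k := by
  obtain ⟨hk1, X, hX, hXk, hs⟩ := hk
  have hne : ∀ i, i < k → w T (X i) ≠ 0 := by
    intro i hi h0
    have := hs i hi
    rw [h0] at this; simp at this
  have hex : ∀ i, ∃ η : ℝ → ℝ, i < k → (Continuous η ∧ η T = X i ∧
      ∀ r ∈ Icc t1 T, 0 < w T (X i) * w r (η r)) := by
    intro i
    by_cases hi : i < k
    · obtain ⟨η, hη⟩ := h.backward' hT (hne i hi)
      exact ⟨η, fun _ => hη⟩
    · exact ⟨fun _ => 0, fun h => absurd h hi⟩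
  choose η hη using hex
  set H : ℕ → ℝ → ℝ := fun i => if i < k then η i else fun r => η 0 r + 1 with hH
  have hprop : ∀ i, i ≤ k → (Continuous (H i) ∧ H i T = X i ∧
      ∀ r ∈ Icc t1 T, 0 < w T (X i) * w r (H i r)) := by
    intro i hi
    rcases Nat.lt_or_ge i k with hlt | hge
    · simp only [hH, hlt, if_true]; exact hη i hlt
    · have : i = k := le_antisymm hi hge
      subst this
      obtain ⟨a1, a2, a3⟩ := hη 0 (by omega)
      simp only [hH, lt_irrefl, if_false]
      refine ⟨by fun_prop, by rw [a2, hXk], fun r hr => ?_⟩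
      rw [hXk, h.per, h.per]; exact a3 r hr
  have hsgn : ∀ i, i < k → ∀ r ∈ Icc t1 T, w r (H i r) * w r (H (i+1) r) < 0 := by
    intro i hi r hr
    have a := (hprop i hi.le).2.2 r hr
    have b := (hprop (i+1) hi).2.2 r hr
    have c := hs i hi
    have d := mul_pos a b
    have e : w T (X i) * w r (H i r) * (w T (X (i + 1)) * w r (H (i + 1) r)) =
      (w T (X i) * w T (X (i+1))) * (w r (H i r) * w r (H (i+1) r)) := by ring
    rw [e] at d
    exact (neg_iff_neg_of_mul_pos d).mp c
  have ht1 : t1 ∈ Icc t1 T := ⟨le_rfl, hT⟩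
  refine ⟨hk1, fun i => H i t1, ?_, ?_, fun i hi => hsgn i hi t1 ht1⟩
  · intro i hi
    by_contra hc
    push Not at hc
    have hcont : ContinuousOn (fun r => H (i+1) r - H i r) (Icc t1 T) :=
      ((hprop (i+1) hi).1.sub (hprop i hi.le).1).continuousOn
    have := intermediate_value_Icc hT hcont
    have h0 : (0:ℝ) ∈ Icc (H (i+1) t1 - H i t1) (H (i+1) T - H i T) := by
      refine ⟨by linarith, ?_⟩
      rw [(hprop (i+1) hi).2.1, (hprop i hi.le).2.1]
      linarith [hX i hi]
    obtain ⟨r, hr, hr0⟩ := this h0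
    simp only at hr0
    have e : H (i+1) r = H i r := by linarith
    have := hsgn i hi r hr
    rw [e] at this
    nlinarith [mul_self_nonneg (w r (H i r))]
  · have : 0 < k := hk1
    simp [hH, this]

theorem HasSC.insert {φ : ℝ → ℝ} {k : ℕ} {X : ℕ → ℝ} (hX : ∀ i < k, X i < X (i+1))
    (hXk : X k = X 0 + 1) (hs : ∀ i < k, φ (X i) * φ (X (i+1)) < 0) {i : ℕ} (hi : i < k) {p q : ℝ}
    (h1 : X i < p) (h2 : p < q) (h3 : q < X (i+1)) (s1 : φ (X i) * φ p < 0) (s2 : φ p * φ q < 0)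
    (s3 : φ q * φ (X (i+1)) < 0) : HasSC φ (k+2) := by
  set Y : ℕ → ℝ := fun j => if j ≤ i then X j else if j = i + 1 then p else if j = i + 2 then q
    else X (j - 2) with hY
  have y1 : ∀ j, j ≤ i → Y j = X j := fun j hj => by simp [hY, hj]
  have y2 : Y (i+1) = p := by simp [hY]
  have y3 : Y (i+2) = q := by simp [hY]
  have y4 : ∀ j, i < j → Y (j+2) = X j := fun j hj => by
    simp only [hY]
    rw [if_neg (by omega), if_neg (by omega), if_neg (by omega)]; rfl
  have key : ∀ P : ℝ → ℝ → Prop, (∀ j < k, P (X j) (X (j+1))) → P (X i) p → P p q → P q (X (i+1)) →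
      ∀ j < k + 2, P (Y j) (Y (j+1)) := by
    intro P a b c d j hj
    rcases Nat.lt_trichotomy j i with hlt | heq | hgt
    · rw [y1 j hlt.le, y1 (j+1) hlt]; exact a j (by omega)
    · subst heq; rw [y1 j le_rfl, y2]; exact b
    · by_cases e1 : j = i + 1
      · subst e1; rw [y2, y3]; exact c
      · by_cases e2 : j = i + 2
        · subst e2; rw [y3, show i + 2 + 1 = (i+1)+2 by ring, y4 (i+1) (by omega)]; exact d
        · obtain ⟨m, rfl⟩ : ∃ m, j = m + 2 := ⟨j - 2, by omega⟩
          rw [y4 m (by omega), show m + 2 + 1 = (m+1)+2 by ring, y4 (m+1) (by omega)]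
          exact a m (by omega)
  refine ⟨by omega, Y, key (fun a b => a < b) hX h1 h2 h3, ?_, key (fun a b => φ a * φ b < 0) hs s1 s2 s3⟩
  rw [y4 k hi, y1 0 (by omega), hXk]

theorem Nice.exists_simple {w : ℝ → ℝ → ℝ} (h : Nice w) {N : ℕ}
    (hmax : ∀ t k, HasSC (w t) k → k ≤ N) (hN : N = 0 ∨ HasSC (w 0) N) (hne : ∃ x, w 0 x ≠ 0) :
    ∃ t0, ∀ x, w t0 x = 0 → deriv (w t0) x ≠ 0 := by
  rcases hN with h0 | hSC
  · subst h0
    -- one sign case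
    have main : ∀ v : ℝ → ℝ → ℝ, Nice v → (∀ t k, HasSC (v t) k → k ≤ 0) → (∃ x, 0 < v 0 x) →
        ∃ t0, ∀ x, 0 < v t0 x := by
      rintro v hv hvmax ⟨x0, hx0⟩
      have e1 := (hv.contt x0).continuousAt.eventually (lt_mem_nhds hx0)
      rw [Metric.eventually_nhds_iff] at e1
      obtain ⟨δ, hδ, hh⟩ := e1
      have hp : ∀ t, 0 ≤ t → t ≤ δ/2 → 0 < v t x0 := fun t a b =>
        hh (by rw [Real.dist_eq, abs_lt]; constructor <;> linarith)
      have hnn : ∀ t x, 0 ≤ t → t ≤ δ/2 → x0 ≤ x → x ≤ x0 + 1 → 0 ≤ v t x := by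
        intro t x a b c d
        by_contra hc
        push Not at hc
        have hpt := hp t a b
        have c' : x0 < x := lt_of_le_of_ne c (by intro e; rw [← e] at hc; linarith)
        have d' : x < x0 + 1 := lt_of_le_of_ne d (by intro e; rw [e, hv.per] at hc; linarith)
        have : HasSC (v t) 2 := by
          refine ⟨by omega, fun i => if i = 0 then x0 else if i = 1 then x else x0 + 1, ?_, by simp, ?_⟩
          · intro i hi
            interval_cases i
            · simpa using c'
            · simpa using d'
          · intro i hi
            interval_cases i
            · simpa using mul_neg_of_pos_of_neg hpt hc
            · simpa [hv.per] using mul_neg_of_neg_of_pos hc hpt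
        have := hvmax t 2 this
        omega
      refine ⟨δ/2, fun x => ?_⟩
      have e := hv.perz (δ/2) (x0 + Int.fract (x - x0)) ⌊x - x0⌋
      rw [add_assoc, Int.fract_add_floor] at e
      have e' : v (δ/2) x = v (δ/2) (x0 + Int.fract (x - x0)) := by rw [← e]; congr 1; ring
      rw [e']
      rcases eq_or_lt_of_le (Int.fract_nonneg (x - x0)) with hf | hf
      · rw [← hf, add_zero]; exact hp _ (by linarith) le_rfl
      · exact hv.strong (t1 := 0) (t0 := δ/2) (α := x0) (β := x0 + 1) (by linarith) hnn
          (fun t a b => by rw [hv.per]; exact hp t a b) _ (by linarith)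
          (by linarith [Int.fract_lt_one (x - x0)])
    obtain ⟨x, hx⟩ := hne
    rcases lt_or_gt_of_ne hx with hlt | hgt
    · obtain ⟨t0, ht0⟩ := main (fun t x => - w t x) h.neg (by
        rintro t k ⟨a, X, b, c, d⟩
        exact hmax t k ⟨a, X, b, c, fun i hi => by simpa using d i hi⟩) ⟨x, by simpa using hlt⟩
      refine ⟨t0, fun x hx => ?_⟩
      have := ht0 x
      rw [hx] at this; simp at this
    · obtain ⟨t0, ht0⟩ := main w h hmax ⟨x, hgt⟩
      refine ⟨t0, fun x hx => ?_⟩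
      have := ht0 x
      rw [hx] at this; simp at this
  · obtain ⟨hk1, X, hX, hXk, hs⟩ := hSC
    have hnz : ∀ i, i ≤ N → w 0 (X i) ≠ 0 := by
      intro i hi h0
      rcases Nat.lt_or_ge i N with hlt | hge
      · have := hs i hlt
        rw [h0] at this; simp at this
      · have : i = N := by omega
        subst this
        have := hs 0 hk1
        rw [hXk, h.per] at h0
        rw [h0] at this; simp at this
    obtain ⟨δ, hδ, hper⟩ : ∃ δ > 0, ∀ t, 0 ≤ t → t ≤ δ → ∀ i, i ≤ N → 0 < w 0 (X i) * w t (X i) := by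
      have e1 : ∀ᶠ t in nhds (0:ℝ), ∀ i ∈ Finset.range (N+1), 0 < w 0 (X i) * w t (X i) := by
        rw [Filter.eventually_all_finset]
        intro i hi
        have hc : Continuous (fun t => w 0 (X i) * w t (X i)) := continuous_const.mul (h.contt (X i))
        refine hc.continuousAt.eventually (lt_mem_nhds ?_)
        exact mul_self_pos.mpr (hnz i (by simpa [Nat.lt_succ_iff] using hi))
      rw [Metric.eventually_nhds_iff] at e1
      obtain ⟨δ, hδ, hh⟩ := e1
      refine ⟨δ/2, by linarith, fun t a b i hi => hh (y := t) ?_ i (by simpa [Nat.lt_succ_iff] using hi)⟩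
      rw [Real.dist_eq, abs_lt]; constructor <;> linarith
    have hst : ∀ t, 0 ≤ t → t ≤ δ → ∀ i < N, w t (X i) * w t (X (i+1)) < 0 := by
      intro t a b i hi
      have c := hper t a b i hi.le
      have d := hper t a b (i+1) hi
      have e := mul_pos c d
      have f : w 0 (X i) * w t (X i) * (w 0 (X (i + 1)) * w t (X (i + 1))) =
        (w 0 (X i) * w 0 (X (i+1))) * (w t (X i) * w t (X (i+1))) := by ring
      rw [f] at e
      exact (neg_iff_neg_of_mul_pos e).mp (hs i hi)
    have hind : ∀ n, n ≤ N → ∃ s1 s2, 0 ≤ s1 ∧ s1 < s2 ∧ s2 ≤ δ ∧ ∀ i < n, ∀ t x, s1 ≤ t → t ≤ s2 →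
        X i ≤ x → x ≤ X (i+1) → w t x = 0 → deriv (w t) x ≠ 0 := by
      intro n
      induction n with
      | zero => intro _; exact ⟨0, δ, le_rfl, hδ, le_rfl, fun i hi => absurd hi (by omega)⟩
      | succ n ih =>
        intro hn
        obtain ⟨s1, s2, a1, a2, a3, a4⟩ := ih (by omega)
        have step : ∃ s1' s2', s1 ≤ s1' ∧ s1' < s2' ∧ s2' ≤ s2 ∧ ∀ t x, s1' ≤ t → t ≤ s2' → X n ≤ x →
            x ≤ X (n+1) → w t x = 0 → deriv (w t) x ≠ 0 := by
          have hbadgen : ∀ t p q, 0 ≤ t → t ≤ δ → X n < p → p < q → q < X (n+1) →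
              w t (X n) * w t p < 0 → w t p * w t q < 0 → w t q * w t (X (n+1)) < 0 → False := by
            intro t p q b1 b2 b3 b4 b5 b6 b7 b8
            have := hmax t _ (HasSC.insert hX hXk (hst t b1 b2) (show n < N by omega) b3 b4 b5 b6 b7 b8)
            omega
          rcases lt_or_gt_of_ne (hnz n (by omega)) with hlt | hgt
          · have hα : ∀ t, s1 ≤ t → t ≤ s2 → w t (X n) < 0 := fun t b1 b2 => by
              have := hper t (by linarith) (by linarith) n (by omega)
              exact (neg_iff_neg_of_mul_pos this).mp hlt
            have hβ : ∀ t, s1 ≤ t → t ≤ s2 → 0 < w t (X (n+1)) := fun t b1 b2 => by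
              have := hst t (by linarith) (by linarith) n (by omega)
              have := hα t b1 b2
              by_contra hc
              nlinarith
            refine h.piece a2 (hX n (by omega)) hα hβ ?_
            rintro t p q b1 b2 b3 b4 b5 ⟨b6, b7⟩
            have c1 := hα t b1 b2
            have c2 := hβ t b1 b2
            refine hbadgen t p q (by linarith) (by linarith)
              (lt_of_le_of_ne b3 (by intro e; rw [e] at c1; linarith)) b4
              (lt_of_le_of_ne b5 (by intro e; rw [← e] at c2; linarith)) ?_ ?_ ?_
            · exact mul_neg_of_neg_of_pos c1 b6
            · exact mul_neg_of_pos_of_neg b6 b7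
            · exact mul_neg_of_neg_of_pos b7 c2
          · have hα : ∀ t, s1 ≤ t → t ≤ s2 → 0 < w t (X n) := fun t b1 b2 => by
              have := hper t (by linarith) (by linarith) n (by omega)
              exact (pos_iff_pos_of_mul_pos this).mp hgt
            have hβ : ∀ t, s1 ≤ t → t ≤ s2 → w t (X (n+1)) < 0 := fun t b1 b2 => by
              have := hst t (by linarith) (by linarith) n (by omega)
              have := hα t b1 b2
              by_contra hc
              nlinarith
            have := h.neg.piece a2 (hX n (by omega)) (fun t b1 b2 => by simpa using hα t b1 b2)
              (fun t b1 b2 => by simpa using hβ t b1 b2) ?_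
            · obtain ⟨s1', s2', d1, d2, d3, d4⟩ := this
              refine ⟨s1', s2', d1, d2, d3, fun t x e1 e2 e3 e4 e5 => ?_⟩
              have := d4 t x e1 e2 e3 e4 (by simpa using e5)
              rw [deriv.fun_neg] at this
              simpa using this
            · rintro t p q b1 b2 b3 b4 b5 ⟨b6, b7⟩
              have c1 := hα t b1 b2
              have c2 := hβ t b1 b2
              have b6 : w t p < 0 := by linarith
              have b7 : 0 < w t q := by linarith
              refine hbadgen t p q (by linarith) (by linarith)
                (lt_of_le_of_ne b3 (by intro e; rw [e] at c1; linarith)) b4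
                (lt_of_le_of_ne b5 (by intro e; rw [← e] at c2; linarith)) ?_ ?_ ?_
              · exact mul_neg_of_pos_of_neg c1 b6
              · exact mul_neg_of_neg_of_pos b6 b7
              · exact mul_neg_of_pos_of_neg b7 c2
        obtain ⟨s1', s2', d1, d2, d3, d4⟩ := step
        refine ⟨s1', s2', by linarith, d2, by linarith, fun i hi t x e1 e2 => ?_⟩
        rcases Nat.lt_succ_iff_lt_or_eq.mp hi with hlt | heq
        · exact a4 i hlt t x (by linarith) (by linarith)
        · subst heq; exact d4 t x e1 e2
    obtain ⟨s1, s2, a1, a2, a3, a4⟩ := hind N le_rfl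
    refine ⟨s1, fun x hx => ?_⟩
    have hfind : ∀ y n, X 0 ≤ y → y ≤ X (n+1) → ∃ i, i ≤ n ∧ X i ≤ y ∧ y ≤ X (i+1) := by
      intro y n h1
      induction n with
      | zero => intro h2; exact ⟨0, le_rfl, h1, h2⟩
      | succ n ih =>
        intro h2
        by_cases hy : y ≤ X (n+1)
        · obtain ⟨i, b1, b2⟩ := ih hy
          exact ⟨i, by omega, b2⟩
        · exact ⟨n+1, le_rfl, (not_le.mp hy).le, h2⟩
    set y := X 0 + Int.fract (x - X 0) with hy
    have exy : x = y + ⌊x - X 0⌋ := by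
      rw [hy, add_assoc, Int.fract_add_floor]; ring
    obtain ⟨m, rfl⟩ : ∃ m, N = m + 1 := ⟨N - 1, by omega⟩
    obtain ⟨i, b1, b2, b3⟩ := hfind y m (by linarith [Int.fract_nonneg (x - X 0)])
      (by rw [hXk]; linarith [Int.fract_lt_one (x - X 0)])
    rw [exy, h.perz] at hx
    rw [exy, h.derperz]
    exact a4 i (by omega) s1 y le_rfl a2.le b2 b3 hx

theorem hasSC_of_mem {φ : ℝ → ℝ} (hφ : ∀ x, φ (x+1) = φ x) {k : ℕ} (hk : 1 ≤ k)
    (h : ∃ x : Fin k → ℝ, StrictMono x ∧ (∀ i j : Fin k, x j < x i + 1) ∧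
      ∀ i : Fin k, φ (x i) * φ (x (finRotate k i)) < 0) : HasSC φ k := by
  obtain ⟨n, rfl⟩ : ∃ n, k = n + 1 := ⟨k - 1, by omega⟩
  obtain ⟨x, h1, h2, h3⟩ := h
  refine ⟨hk, fun i => if hi : i < n + 1 then x ⟨i, hi⟩ else x 0 + 1, ?_, by simp, ?_⟩
  · intro i hi
    by_cases hi2 : i + 1 < n + 1
    · simp only [hi, hi2, dif_pos]
      exact h1 (by simp)
    · simp only [hi, hi2, dif_pos]
      exact h2 _ _
  · intro i hi
    have := h3 ⟨i, hi⟩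
    by_cases hi2 : i + 1 < n + 1
    · simp only [hi, hi2, dif_pos]
      rwa [finRotate_of_lt (by omega)] at this
    · have e : i = n := by omega
      subst e
      simp only [hi, hi2, dif_pos, dif_neg, not_false_eq_true, hφ]
      rwa [finRotate_last'] at this

theorem mem_of_hasSC {φ : ℝ → ℝ} (hφ : ∀ x, φ (x+1) = φ x) {k : ℕ} (h : HasSC φ k) :
    ∃ x : Fin k → ℝ, StrictMono x ∧ (∀ i j : Fin k, x j < x i + 1) ∧
      ∀ i : Fin k, φ (x i) * φ (x (finRotate k i)) < 0 := by
  obtain ⟨hk, X, hX, hXk, hs⟩ := h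
  obtain ⟨n, rfl⟩ : ∃ n, k = n + 1 := ⟨k - 1, by omega⟩
  have hle : ∀ i j, i ≤ j → j ≤ n + 1 → X i ≤ X j := by
    intro i j hij
    induction j, hij using Nat.le_induction with
    | base => intro _; exact le_rfl
    | succ j hj ih => intro h; exact (ih (by omega)).trans (hX j (by omega)).le
  refine ⟨fun i => X i, ?_, ?_, ?_⟩
  · rw [Fin.strictMono_iff_lt_succ]
    intro i
    exact hX i (by have := i.2; omega)
  · intro i j
    have a := hle (j+1) (n+1) (by have := j.2; omega) le_rfl
    have b := hX j j.2
    have c := hle 0 i (by omega) (by have := i.2; omega)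
    rw [hXk] at a
    linarith
  · rintro ⟨i, hi⟩
    by_cases hi2 : i < n
    · rw [finRotate_of_lt hi2]; exact hs i hi
    · have e : i = n := by omega
      subst e
      rw [finRotate_last']
      have := hs i hi
      rw [hXk, hφ] at this
      exact this

theorem zeroNumber_le {φ ψ : ℝ → ℝ} (hφ : ∀ x, φ (x+1) = φ x) (hψ : ∀ x, ψ (x+1) = ψ x)
    (h : ∀ k, HasSC φ k → HasSC ψ k) : zeroNumber φ ≤ zeroNumber ψ := by
  unfold zeroNumber
  refine iSup₂_le fun k hk => ?_
  rcases Nat.eq_zero_or_pos k with h0 | hpos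
  · subst h0; simp
  · have := mem_of_hasSC hψ (h k (hasSC_of_mem hφ hpos hk))
    exact le_iSup₂_of_le k this le_rfl

theorem le_zeroNumber {φ : ℝ → ℝ} (hφ : ∀ x, φ (x+1) = φ x) {k : ℕ} (h : HasSC φ k) :
    (k : ℕ∞) ≤ zeroNumber φ :=
  le_iSup₂_of_le (f := fun k (_ : k ∈ {k : ℕ | ∃ x : Fin k → ℝ, StrictMono x ∧ (∀ i j : Fin k, x j < x i + 1) ∧
      ∀ i : Fin k, φ (x i) * φ (x (finRotate k i)) < 0}) => (k : ℕ∞)) k (mem_of_hasSC hφ h) le_rfl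

/-- `C¹` upper semicontinuity at functions with simple zeros. -/
theorem HasSC.of_close {v g : ℝ → ℝ} {c : ℝ} (hv : Differentiable ℝ v) (hvp : ∀ x, v (x+1) = v x)
    (hgp : ∀ x, g (x+1) = g x)
    (hg : ∀ x, c ≤ |g x| ∨ c ≤ |deriv g x|) (h0 : ∀ x, |v x - g x| < c)
    (h1 : ∀ x, |deriv v x - deriv g x| < c) {k : ℕ} (h : HasSC v k) : HasSC g k := by
  obtain ⟨hk, X, hX, hXk, hs⟩ := h
  have hcrit : ∀ x, deriv v x = 0 → v x ≠ 0 → 0 < v x * g x := by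
    intro x hx hx0
    have a := h1 x
    rw [hx, zero_sub, abs_neg] at a
    have b : c ≤ |g x| := (hg x).resolve_right (not_le.mpr a)
    have d := h0 x
    rcases lt_or_gt_of_ne hx0 with hl | hl
    · have : g x < 0 := by
        by_contra hc
        push Not at hc
        rw [abs_of_nonneg hc] at b
        rw [abs_lt] at d; linarith
      exact mul_pos_of_neg_of_neg hl this
    · have : 0 < g x := by
        by_contra hc
        push Not at hc
        rw [abs_of_nonpos hc] at b
        rw [abs_lt] at d; linarith
      exact mul_pos hl this
  have hzero : ∀ i, ∃ z, i < k → (X i < z ∧ z < X (i+1) ∧ v z = 0) := by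
    intro i
    by_cases hi : i < k
    · have hsi := hs i hi
      have hc : ContinuousOn v (uIcc (X i) (X (i+1))) := hv.continuous.continuousOn
      have h0m : (0:ℝ) ∈ uIcc (v (X i)) (v (X (i+1))) := by
        rw [mem_uIcc]
        rcases mul_neg_iff.mp hsi with ⟨a, b⟩ | ⟨a, b⟩
        · right; exact ⟨b.le, a.le⟩
        · left; exact ⟨a.le, b.le⟩
      obtain ⟨z, hz, hz0⟩ := intermediate_value_uIcc hc h0m
      rw [uIcc_of_le (hX i hi).le] at hz
      refine ⟨z, fun _ => ⟨lt_of_le_of_ne hz.1 ?_, lt_of_le_of_ne hz.2 ?_, hz0⟩⟩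
      · intro e; rw [e, hz0] at hsi; simp at hsi
      · intro e; rw [← e, hz0] at hsi; simp at hsi
    · exact ⟨0, fun h => absurd h hi⟩
  choose Z0 hZ0 using hzero
  set Z : ℕ → ℝ := fun i => if i < k then Z0 i else Z0 0 + 1 with hZ
  have hZl : ∀ i, i < k → Z i = Z0 i := fun i hi => by simp [hZ, hi]
  have hZk : Z k = Z0 0 + 1 := by simp [hZ]
  have hZprop : ∀ i, i ≤ k → X i < Z i ∧ v (Z i) = 0 := by
    intro i hi
    rcases Nat.lt_or_ge i k with hlt | hge
    · rw [hZl i hlt]; exact ⟨(hZ0 i hlt).1, (hZ0 i hlt).2.2⟩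
    · have : i = k := by omega
      subst this
      rw [hZk, hXk, hvp]
      have := hZ0 0 hk
      exact ⟨by linarith [this.1], this.2.2⟩
  have hZX : ∀ i, i < k → Z i < X (i+1) := fun i hi => by rw [hZl i hi]; exact (hZ0 i hi).2.1
  have hvne : ∀ i, i < k → v (X (i+1)) ≠ 0 := by
    intro i hi h0
    have := hs i hi
    rw [h0] at this; simp at this
  have hpt : ∀ i, ∃ y, i < k → (Z i < y ∧ y < Z (i+1) ∧ 0 < v (X (i+1)) * g y) := by
    intro i
    by_cases hi : i < k
    · have a := hZX i hi
      have b := (hZprop (i+1) hi).1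
      have za := (hZprop i hi.le).2
      have zb := (hZprop (i+1) hi).2
      set σ := v (X (i+1)) with hσ
      have hσ0 : σ ≠ 0 := hvne i hi
      have hcσ : ContinuousOn (fun y => σ * v y) (Icc (Z i) (Z (i+1))) :=
        (continuous_const.mul hv.continuous).continuousOn
      obtain ⟨y, hy, hym⟩ := isCompact_Icc.exists_isMaxOn ⟨X (i+1), a.le, b.le⟩ hcσ
      have hpos : 0 < σ * v y := lt_of_lt_of_le (mul_self_pos.mpr hσ0) (hym ⟨a.le, b.le⟩)
      have hy1 : Z i < y := lt_of_le_of_ne hy.1 (by intro e; rw [← e, za] at hpos; simp at hpos)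
      have hy2 : y < Z (i+1) := lt_of_le_of_ne hy.2 (by intro e; rw [e, zb] at hpos; simp at hpos)
      have hloc : IsLocalMax (fun y => σ * v y) y := hym.isLocalMax (Icc_mem_nhds hy1 hy2)
      have hd := hloc.deriv_eq_zero
      rw [deriv_const_mul _ (hv y)] at hd
      have hd0 : deriv v y = 0 := by
        rcases mul_eq_zero.mp hd with e | e
        · exact absurd e hσ0
        · exact e
      have hvy : v y ≠ 0 := by intro e; rw [e] at hpos; simp at hpos
      have := mul_pos hpos (hcrit y hd0 hvy)
      refine ⟨y, fun _ => ⟨hy1, hy2, ?_⟩⟩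
      have e : σ * v y * (v y * g y) = (v y * v y) * (σ * g y) := by ring
      rw [e] at this
      exact (pos_iff_pos_of_mul_pos this).mp (mul_self_pos.mpr hvy)
    · exact ⟨0, fun h => absurd h hi⟩
  choose Y0 hY0 using hpt
  obtain ⟨n, rfl⟩ : ∃ n, k = n + 1 := ⟨k - 1, by omega⟩
  set Y : ℕ → ℝ := fun i => Nat.casesOn i (Y0 n - 1) (fun j => Y0 j) with hY
  have y0 : Y 0 = Y0 n - 1 := rfl
  have ys : ∀ j, Y (j+1) = Y0 j := fun j => rfl
  have hgY : ∀ i, i ≤ n + 1 → 0 < v (X i) * g (Y i) := by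
    intro i hi
    cases i with
    | zero =>
      have := (hY0 n (by omega)).2.2
      rw [hXk, hvp] at this
      rw [y0, ← hgp]; simpa using this
    | succ j => rw [ys]; exact (hY0 j (by omega)).2.2
  refine ⟨hk, Y, ?_, ?_, ?_⟩
  · intro i hi
    cases i with
    | zero =>
      rw [y0, ys]
      have a := (hY0 n (by omega)).2.1
      have b := (hY0 0 (by omega)).1
      rw [hZk] at a
      rw [hZl 0 (by omega)] at b
      linarith
    | succ j =>
      rw [ys, ys]
      exact (hY0 j (by omega)).2.1.trans (hY0 (j+1) hi).1
  · rw [y0, ys]; ring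
  · intro i hi
    have a := hgY i (by omega)
    have b := hgY (i+1) (by omega)
    have e := mul_pos a b
    have f : v (X i) * g (Y i) * (v (X (i + 1)) * g (Y (i + 1))) =
        (v (X i) * v (X (i+1))) * (g (Y i) * g (Y (i+1))) := by ring
    rw [f] at e
    exact (neg_iff_neg_of_mul_pos e).mp (hs i hi)

theorem bdd_of_per {g : ℝ × ℝ → ℝ} (hg : Continuous g) (hp : ∀ t x (n : ℤ), g (t, x + n) = g (t, x))
    (T1 T2 : ℝ) : ∃ M, 0 ≤ M ∧ ∀ t ∈ Icc T1 T2, ∀ x, |g (t, x)| ≤ M := by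
  obtain ⟨M, hM⟩ := ((isCompact_Icc (a := T1) (b := T2)).prod (isCompact_Icc (a := (0:ℝ)) (b := 1))).exists_bound_of_continuousOn
    hg.continuousOn
  refine ⟨max M 0, le_max_right _ _, fun t ht x => ?_⟩
  have e := hp t (Int.fract x) ⌊x⌋
  rw [Int.fract_add_floor] at e
  rw [e]
  exact (hM (t, Int.fract x) ⟨ht, Int.fract_nonneg x, (Int.fract_lt_one x).le⟩).trans (le_max_left _ _)

theorem IsClassicalSolution.sub_nice {f : ℝ → ℝ → ℝ → ℝ}
    (hf_reg : ContDiff ℝ 2 (fun q : ℝ × ℝ × ℝ => f q.1 q.2.1 q.2.2))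
    (hf_per : ∀ (x w q : ℝ), f (x + 1) w q = f x w q)
    {u v : ℝ → ℝ → ℝ} (hu : IsClassicalSolution f u) (hv : IsClassicalSolution f v) :
    Nice (fun t x => u t x - v t x) := by
  obtain ⟨u1, u2, u3, u4, u5, u6, u7, u8, u9⟩ := hu
  obtain ⟨v1, v2, v3, v4, v5, v6, v7, v8, v9⟩ := hv
  have e1 : ∀ t, deriv (fun x => u t x - v t x) = fun x => deriv (u t) x - deriv (v t) x := by
    intro t; ext x; exact deriv_fun_sub (u4 t x) (v4 t x)
  refine ⟨fun t x => by rw [u1 t x, v1 t x], u2.sub v2, fun t x => (u3 t x).sub (v3 t x),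
    fun t => (u4 t).sub (v4 t), fun t => ?_, ?_, fun T1 T2 => ?_⟩
  · rw [e1]; exact (u5 t).sub (v5 t)
  · simp only [e1]; exact u7.sub v7
  · have perz : ∀ w : ℝ → ℝ → ℝ, (∀ t, Function.Periodic (w t) 1) → ∀ t x (n : ℤ), w t (x + n) = w t x := by
      intro w hw t x n
      have := (hw t).int_mul n x
      simpa using this
    have dperz : ∀ w : ℝ → ℝ → ℝ, (∀ t, Function.Periodic (w t) 1) → ∀ t x (n : ℤ),
        deriv (w t) (x + n) = deriv (w t) x := by
      intro w hw t x n
      rw [← deriv_comp_add_const]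
      congr 1
      ext y; exact perz w hw t y n
    obtain ⟨M1, m1, hM1⟩ := bdd_of_per u2 (fun t x n => perz u u1 t x n) T1 T2
    obtain ⟨M2, m2, hM2⟩ := bdd_of_per v2 (fun t x n => perz v v1 t x n) T1 T2
    obtain ⟨M3, m3, hM3⟩ := bdd_of_per u7 (fun t x n => dperz u u1 t x n) T1 T2
    obtain ⟨M4, m4, hM4⟩ := bdd_of_per v7 (fun t x n => dperz v v1 t x n) T1 T2
    set M := M1 + M2 + M3 + M4 + 1 with hM
    have hcomp : IsCompact (Metric.closedBall (0 : ℝ × ℝ × ℝ) M) := isCompact_closedBall _ _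
    obtain ⟨L, hL⟩ := (hf_reg.of_le (m := 1) (by norm_num)).locallyLipschitz.locallyLipschitzOn (s := Metric.closedBall (0 : ℝ × ℝ × ℝ) M)
      |>.exists_lipschitzOnWith_of_compact hcomp
    refine ⟨L, L.2, fun t ht x => ?_⟩
    have hfz : ∀ x w q, f x w q = f (Int.fract x) w q := by
      intro x w q
      have := (show Function.Periodic (fun x => f x w q) 1 from fun x => hf_per x w q).int_mul ⌊x⌋ (Int.fract x)
      simp only [mul_one, Int.fract_add_floor] at this
      exact this
    rw [deriv_fun_sub (u3 t x) (v3 t x), u9, v9, e1, deriv_fun_sub (u5 t x) (v5 t x)]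
    simp only
    have ea : deriv (deriv (u t)) x + f x (u t x) (deriv (u t) x) - (deriv (deriv (v t)) x + f x (v t x) (deriv (v t) x))
      - (deriv (deriv (u t)) x - deriv (deriv (v t)) x) = f (Int.fract x) (u t x) (deriv (u t) x) - f (Int.fract x) (v t x) (deriv (v t) x) := by
      rw [← hfz, ← hfz]; ring
    rw [ea]
    have hfr : |Int.fract x| ≤ M := by
      rw [abs_of_nonneg (Int.fract_nonneg x)]; linarith [Int.fract_lt_one x]
    have i1 := hM1 t ht x
    have i2 := hM2 t ht x
    have i3 := hM3 t ht x
    have i4 := hM4 t ht x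
    simp only at i1 i2 i3 i4
    have := hL.dist_le_mul (Int.fract x, u t x, deriv (u t) x)
      (by
        rw [mem_closedBall_zero_iff, Prod.norm_def, Prod.norm_def]
        simp only [Real.norm_eq_abs]
        exact max_le hfr (max_le (by linarith) (by linarith)))
      (Int.fract x, v t x, deriv (v t) x)
      (by
        rw [mem_closedBall_zero_iff, Prod.norm_def, Prod.norm_def]
        simp only [Real.norm_eq_abs]
        exact max_le hfr (max_le (by linarith) (by linarith)))
    rw [Real.dist_eq] at this
    refine this.trans (mul_le_mul_of_nonneg_left ?_ L.2)
    rw [Prod.dist_eq, Prod.dist_eq]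
    simp only [Real.dist_eq, sub_self, abs_zero]
    have p1 := abs_nonneg (u t x - v t x)
    have p2 := abs_nonneg (deriv (u t) x - deriv (v t) x)
    exact max_le (by linarith) (max_le (by linarith) (by linarith))

theorem IsEquilibrium.sol {f : ℝ → ℝ → ℝ → ℝ} {e : ℝ → ℝ} (he : IsEquilibrium f e) :
    IsClassicalSolution f (fun _ x => e x) := by
  obtain ⟨h1, h2, h3⟩ := he
  have d1 : Differentiable ℝ e := h2.differentiable (by norm_num)
  have c1 : ContDiff ℝ 1 (deriv e) := by
    have : ContDiff ℝ (1 + 1) e := by norm_num; exact h2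
    exact (contDiff_succ_iff_deriv.mp this).2.2
  have c2 : Continuous (deriv (deriv e)) := c1.continuous_deriv le_rfl
  refine ⟨fun _ => h1, by have := d1.continuous; fun_prop, fun t x => by simp, fun _ => d1,
    fun _ => c1.differentiable (by norm_num), by simp; fun_prop, c1.continuous.comp continuous_snd,
    c2.comp continuous_snd, ?_⟩
  intro t x
  simp [h3]

theorem IsClassicalSolution.shift {f : ℝ → ℝ → ℝ → ℝ} {u : ℝ → ℝ → ℝ}
    (hu : IsClassicalSolution f u) (a : ℝ) : IsClassicalSolution f (fun t x => u (a + t) x) := by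
  obtain ⟨u1, u2, u3, u4, u5, u6, u7, u8, u9⟩ := hu
  have hc : Continuous (fun p : ℝ × ℝ => (a + p.1, p.2)) := by fun_prop
  have ed : ∀ t x, deriv (fun s => u (a + s) x) t = deriv (fun s => u s x) (a + t) := by
    intro t x
    exact deriv_comp_const_add (f := fun s => u s x) a t
  refine ⟨fun t => u1 _, u2.comp hc, fun t x => ?_, fun t => u4 _, fun t => u5 _, ?_, u7.comp hc, u8.comp hc, ?_⟩
  · exact DifferentiableAt.comp t (g := fun s => u s x) (f := fun s => a + s) (u3 (a + t) x) (by fun_prop)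
  · simp only [ed]; exact u6.comp hc
  · intro t x
    rw [ed]; exact u9 (a + t) x

theorem HasSC.of_near {φ ψ : ℝ → ℝ} {k : ℕ} {X : ℕ → ℝ} (hk : 1 ≤ k)
    (hX : ∀ i < k, X i < X (i+1)) (hXk : X k = X 0 + 1)
    (hs : ∀ i < k, φ (X i) * φ (X (i+1)) < 0)
    (h : ∀ i ≤ k, |ψ (X i) - φ (X i)| < |φ (X i)|) : HasSC ψ k := by
  refine ⟨hk, X, hX, hXk, fun i hi => ?_⟩
  have a := abs_lt.mp (h i hi.le)
  have b := abs_lt.mp (h (i+1) hi)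
  have c := hs i hi
  rcases mul_neg_iff.mp c with ⟨c1, c2⟩ | ⟨c1, c2⟩
  · rw [abs_of_pos c1] at a
    rw [abs_of_neg c2] at b
    exact mul_neg_of_pos_of_neg (by linarith [a.1]) (by linarith [b.2])
  · rw [abs_of_neg c1] at a
    rw [abs_of_pos c2] at b
    exact mul_neg_of_neg_of_pos (by linarith [a.2]) (by linarith [b.1])

theorem exists_pos_le (k : ℕ) (g : ℕ → ℝ) (h : ∀ i ≤ k, 0 < g i) : ∃ ε > 0, ∀ i ≤ k, ε ≤ g i := by
  obtain ⟨j, hj, hm⟩ := Finset.exists_min_image (Finset.range (k+1)) g ⟨0, by simp⟩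
  exact ⟨g j, h j (by simp at hj; omega), fun i hi => hm i (by simp; omega)⟩

theorem HasSC.neg {φ : ℝ → ℝ} {k : ℕ} (h : HasSC (fun x => - φ x) k) : HasSC φ k := by
  obtain ⟨hk, X, hX, hXk, hs⟩ := h
  exact ⟨hk, X, hX, hXk, fun i hi => by simpa using hs i hi⟩

theorem Nice.unif_simple {w : ℝ → ℝ → ℝ} (h : Nice w) {t0 : ℝ}
    (h0 : ∀ x, w t0 x = 0 → deriv (w t0) x ≠ 0) :
    ∃ c > 0, ∀ x, c ≤ |w t0 x| ∨ c ≤ |deriv (w t0) x| := by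
  have hc : Continuous (fun x => |w t0 x| + |deriv (w t0) x|) :=
    (h.dx t0).continuous.abs.add (h.dxx t0).continuous.abs
  obtain ⟨y, hy, hm⟩ := (isCompact_Icc (a := (0:ℝ)) (b := 1)).exists_isMinOn ⟨0, by simp⟩ hc.continuousOn
  have hpos : 0 < |w t0 y| + |deriv (w t0) y| := by
    by_cases hz : w t0 y = 0
    · have := abs_pos.mpr (h0 y hz)
      positivity
    · have := abs_pos.mpr hz
      positivity
  refine ⟨(|w t0 y| + |deriv (w t0) y|) / 2, by linarith, fun x => ?_⟩
  have hf : Int.fract x ∈ Icc (0:ℝ) 1 := ⟨Int.fract_nonneg x, (Int.fract_lt_one x).le⟩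
  have hle : |w t0 y| + |deriv (w t0) y| ≤ |w t0 (Int.fract x)| + |deriv (w t0) (Int.fract x)| := hm hf
  have e1 := h.perz t0 (Int.fract x) ⌊x⌋
  have e2 := h.derperz t0 (Int.fract x) ⌊x⌋
  rw [Int.fract_add_floor] at e1 e2
  rw [e1, e2]
  by_contra hcon
  push Not at hcon
  linarith [hcon.1, hcon.2]

/-- **Zero-number comparison along an orbit connecting an equilibrium to a periodic
orbit.**  If `u` is a bounded classical solution converging in `C¹(S¹)` to the
equilibrium `e⁻` as `t → -∞` and to `γ⁺(·,a+t)` as `t → +∞`, with `γ⁺(·,t) ≠ e⁻`,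
`u(·,t) ≠ e⁻` and `u(·,t) ≠ γ⁺(·,a+t)` for all `t`, then for every `t`
`z(u(·,t) − γ⁺(·,a+t)) ≤ z(γ⁺(·,a) − e⁻) ≤ z(u(·,t) − e⁻)`. -/
theorem zero_number_comparison_connecting_orbit
    (f : ℝ → ℝ → ℝ → ℝ)
    (hf_reg : ContDiff ℝ 2 (fun q : ℝ × ℝ × ℝ => f q.1 q.2.1 q.2.2))
    (hf_per : ∀ (x w q : ℝ), f (x + 1) w q = f x w q)
    (e : ℝ → ℝ) (he : IsEquilibrium f e)
    (γ : ℝ → ℝ → ℝ) (p : ℝ) (hγ : IsPeriodicSolution f γ p)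
    (hγe : ∀ t, γ t ≠ e)
    (u : ℝ → ℝ → ℝ) (hu : IsClassicalSolution f u)
    (hu_bdd : ∃ C, ∀ t x : ℝ, |u t x| ≤ C)
    (a : ℝ)
    -- ‖u(·,t) − e⁻‖_{C¹(S¹)} → 0 as t → −∞
    (hconv_minus : ∀ ε > (0:ℝ), ∃ T : ℝ, ∀ t ≤ T, ∀ x : ℝ,
      |u t x - e x| < ε ∧ |deriv (u t) x - deriv e x| < ε)
    -- ‖u(·,t) − γ⁺(·,a+t)‖_{C¹(S¹)} → 0 as t → +∞
    (hconv_plus : ∀ ε > (0:ℝ), ∃ T : ℝ, ∀ t ≥ T, ∀ x : ℝ,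
      |u t x - γ (a + t) x| < ε ∧ |deriv (u t) x - deriv (γ (a + t)) x| < ε)
    (hue : ∀ t, u t ≠ e)
    (huγ : ∀ t, u t ≠ γ (a + t)) :
    ∀ t : ℝ,
      zeroNumber (fun x => u t x - γ (a + t) x) ≤ zeroNumber (fun x => γ a x - e x)
      ∧ zeroNumber (fun x => γ a x - e x) ≤ zeroNumber (fun x => u t x - e x) := by
  obtain ⟨hγs, hp, hγp, -⟩ := hγ
  have hE := he.sol
  have hw : Nice (fun t x => γ (a + t) x - e x) :=
    IsClassicalSolution.sub_nice hf_reg hf_per (hγs.shift a) hE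
  have hV : Nice (fun t x => u t x - γ (a + t) x) :=
    IsClassicalSolution.sub_nice hf_reg hf_per hu (hγs.shift a)
  have hD : Nice (fun t x => u t x - e x) :=
    IsClassicalSolution.sub_nice hf_reg hf_per hu hE
  have hper : ∀ (s : ℝ) (n : ℕ), γ (a + (s + n * p)) = γ (a + s) := by
    intro s n
    have := (show Function.Periodic γ p from hγp).nat_mul n (a + s)
    rw [← this]; congr 1; ring
  have hbig : ∀ M : ℝ, ∃ n : ℕ, M ≤ n * p := by
    intro M
    obtain ⟨n, hn⟩ := exists_nat_ge (M / p)
    exact ⟨n, (div_le_iff₀ hp).mp hn⟩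
  have hall : ∀ s t k, HasSC (fun x => γ (a + t) x - e x) k →
      HasSC (fun x => γ (a + s) x - e x) k := by
    intro s t k hk
    obtain ⟨n, hn⟩ := hbig (s - t)
    rw [← hper t n] at hk
    exact hw.hasSC_mono (t1 := s) (T := t + n * p) (by linarith) hk
  have e0 : (fun x => γ a x - e x) = fun x => γ (a + 0) x - e x := by rw [add_zero]
  intro t
  rw [e0]
  constructor
  · by_cases htop : zeroNumber (fun x => γ (a + 0) x - e x) = ⊤
    · rw [htop]; exact le_top
    obtain ⟨B, hB⟩ := ENat.ne_top_iff_exists.mp htop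
    have hbd : ∀ k, HasSC (fun x => γ (a + 0) x - e x) k → k ≤ B := by
      intro k hk
      have := le_zeroNumber (hw.per 0) hk
      rw [← hB] at this
      exact_mod_cast this
    obtain ⟨N, hN1, hN2⟩ : ∃ N : ℕ, (N = 0 ∨ HasSC (fun x => γ (a + 0) x - e x) N) ∧
        ∀ k, HasSC (fun x => γ (a + 0) x - e x) k → k ≤ N := by
      classical
      refine ⟨Nat.findGreatest (fun k => HasSC (fun x => γ (a + 0) x - e x) k) B, ?_, ?_⟩
      · by_cases hz : Nat.findGreatest (fun k => HasSC (fun x => γ (a + 0) x - e x) k) B = 0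
        · exact Or.inl hz
        · exact Or.inr (Nat.findGreatest_of_ne_zero rfl hz)
      · intro k hk
        exact Nat.le_findGreatest (hbd k hk) hk
    have hne : ∃ x, γ (a + 0) x - e x ≠ 0 := by
      by_contra hcon
      push Not at hcon
      exact hγe (a + 0) (funext fun x => sub_eq_zero.mp (hcon x))
    obtain ⟨t0, ht0⟩ := hw.exists_simple (N := N) (fun s k hk => hN2 k (hall 0 s k hk)) hN1 hne
    obtain ⟨c, hc, hcs⟩ := hw.unif_simple ht0
    obtain ⟨T, hT⟩ := hconv_minus c hc
    refine zeroNumber_le (hV.per t) (hw.per 0) fun k hk => hall 0 t0 k ?_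
    obtain ⟨n, hn⟩ := hbig (t0 - min T t)
    have hT1 : t0 - n * p ≤ T := by linarith [min_le_left T t]
    have hT2 : t0 - n * p ≤ t := by linarith [min_le_right T t]
    have hk2 := hV.hasSC_mono hT2 hk
    have eγ : γ (a + (t0 - n * p)) = γ (a + t0) := by
      rw [← hper (t0 - n * p) n]; congr 1; ring
    rw [eγ] at hk2
    have dγ : Differentiable ℝ (γ (a + t0)) := hγs.2.2.2.1 _
    have de : Differentiable ℝ e := he.2.1.differentiable (by norm_num)
    have du : Differentiable ℝ (u (t0 - n * p)) := hu.2.2.2.1 _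
    have d1 : ∀ x, deriv (fun x => γ (a + t0) x - e x) x = deriv (γ (a + t0)) x - deriv e x :=
      fun x => deriv_fun_sub (dγ x) (de x)
    have d2 : ∀ x, deriv (fun x => u (t0 - n * p) x - γ (a + t0) x) x
        = deriv (u (t0 - n * p)) x - deriv (γ (a + t0)) x :=
      fun x => deriv_fun_sub (du x) (dγ x)
    have d3 : ∀ x, deriv (fun x => - (γ (a + t0) x - e x)) x
        = - (deriv (γ (a + t0)) x - deriv e x) := by
      intro x
      rw [deriv.fun_neg, d1]
    apply HasSC.neg
    refine HasSC.of_close (c := c) (v := fun x => u (t0 - n * p) x - γ (a + t0) x) (du.sub dγ) ?_ ?_ ?_ ?_ ?_ hk2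
    · intro x
      have := hV.per (t0 - n * p) x
      simp only [eγ] at this
      exact this
    · intro x
      have := hw.per t0 x
      exact congrArg Neg.neg this
    · intro x
      have := hcs x
      rw [d1] at this
      rw [d3, abs_neg, abs_neg]
      exact this
    · intro x
      have := (hT _ hT1 x).1
      convert this using 2
      ring
    · intro x
      have := (hT _ hT1 x).2
      rw [d2, d3]
      convert this using 2
      ring
  · refine zeroNumber_le (hw.per 0) (hD.per t) fun k hk => ?_
    obtain ⟨hk1, X, hX, hXk, hs⟩ := hk
    have hne : ∀ i ≤ k, 0 < |γ (a + 0) (X i) - e (X i)| := by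
      intro i hi
      rw [abs_pos]
      intro hz
      rcases Nat.lt_or_ge i k with hlt | hge
      · have := hs i hlt
        simp only [hz, zero_mul, lt_self_iff_false] at this
      · obtain ⟨j, rfl⟩ : ∃ j, i = j + 1 := ⟨i - 1, by omega⟩
        have := hs j (by omega)
        simp only [hz, mul_zero, lt_self_iff_false] at this
    obtain ⟨ε, hε, hεs⟩ := exists_pos_le k _ hne
    obtain ⟨T, hT⟩ := hconv_plus ε hε
    obtain ⟨n, hn⟩ := hbig (max T t)
    have hT1 : T ≤ n * p := (le_max_left _ _).trans hn
    have hT2 : t ≤ n * p := (le_max_right _ _).trans hn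
    refine hD.hasSC_mono hT2 (HasSC.of_near (φ := fun x => γ (a + 0) x - e x) hk1 hX hXk hs fun i hi => ?_)
    have h1 := (hT _ hT1 (X i)).1
    have h2 := hper 0 n
    rw [zero_add] at h2
    rw [h2] at h1
    refine lt_of_lt_of_le ?_ (hεs i hi)
    have e1 : (u (n * p) (X i) - e (X i)) - (γ (a + 0) (X i) - e (X i))
        = u (n * p) (X i) - γ (a + 0) (X i) := by ring
    show |(u (n * p) (X i) - e (X i)) - (γ (a + 0) (X i) - e (X i))| < ε
    rw [e1]; exact h1
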